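/- For every ε > 0 there exists r₀ such that for every integer r ≥ r₀ there exists n₀ such that for all n ≥ n₀, opt_weak,<,r(S_n) ≥ (1−ε)·(r−1)!·n·log_r(n). -/

import Mathlib

/-- `GuessForce ok V m` means: in the mistake-bound game with weak (yes/no) reinforcement
where queries have type `Q`, guesses have type `A`, and `ok q g f` says that guess `g` is a
correct answer to query `q` when the hidden target is `f`, an (adaptive) adversary whose
answers must stay consistent with some member of the current version space `V` can force
every deterministic learner to be answered "no" at least `m` times.
At each step the adversary chooses a query `q` and, depending on the learner's guess `g`,
either answers "no" (`c g = true`, one more mistake, continuing from the consistent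
functions for which the guess is wrong) or answers "yes" (`c g = false`, continuing from the
consistent functions for which the guess is correct). -/
inductive GuessForce {α Q A : Type*} (ok : Q → A → α → Prop) : Set α → ℕ → Prop where
  | zero (V : Set α) : V.Nonempty → GuessForce ok V 0
  | step (V : Set α) (m : ℕ) (q : Q) (c : A → Bool)
      (hne : ∀ g : A, (if c g then {f ∈ V | ¬ ok q g f} else {f ∈ V | ok q g f}).Nonempty)
      (h : ∀ g : A, GuessForce ok (if c g then {f ∈ V | ¬ ok q g f} else {f ∈ V | ok q g f})
        (if c g then m else m + 1)) :
      GuessForce ok V (m + 1)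

/-- `opt_weak,<,r(F)`: the order model. In each round the adversary chooses `r` distinct
inputs, and the learner guesses the permutation of `{1,…,r}` order-isomorphic to the values
of the target permutation at these inputs; weak reinforcement. -/
noncomputable def optOrder (n r : ℕ) (F : Set (Equiv.Perm (Fin n))) : ℕ :=
  sSup {m | GuessForce
    (fun (x : {x : Fin r → Fin n // Function.Injective x}) (σ : Equiv.Perm (Fin r)) f =>
      ∀ i j, σ i < σ j ↔ f (x.1 i) < f (x.1 j)) F m}

/-!
A fixed query can be wasted: answering "no" until a single answer survives costs the learner
`r! - 1` mistakes and reveals only the pattern of the `r` points asked about. The adversary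
therefore starts with disjoint blocks of `r ^ k` points each. It partitions every block into
`r ^ (k - 1)` queries, wastes all of them, and gathers the points of rank `s` in the queries of
block `i` into a new block `(i, s)`. Putting the new blocks one after another in lexicographic order
is consistent with everything revealed so far, so the new blocks are again unconstrained inside, and
the process runs for `k` rounds. With about `n / r ^ k` initial blocks every round costs about
`(n / r) * r! = n * (r - 1)!` mistakes, and `k` may be taken as large as `log_r n - 1`.
-/

open Filter Topology

section WeakReinforcement

variable {α Q A : Type*} {ok : Q → A → α → Prop} {V W : Set α} {m : ℕ}

theorem GuessForce.mono (h : GuessForce ok V m) (hVW : V ⊆ W) : GuessForce ok W m := by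
  induction h generalizing W with
  | zero V hV => exact .zero W (hV.mono hVW)
  | step V m q c hne _ ih =>
    have answer_subset (g : A) : (if c g then {f ∈ V | ¬ ok q g f} else {f ∈ V | ok q g f}) ⊆
        (if c g then {f ∈ W | ¬ ok q g f} else {f ∈ W | ok q g f}) := by
      split_ifs <;> exact fun f hf => ⟨hVW hf.1, hf.2⟩
    exact .step W m q c (fun g => (hne g).mono (answer_subset g)) fun g => ih g (answer_subset g)

theorem GuessForce.nonempty [Nonempty A] (h : GuessForce ok V m) : V.Nonempty := by
  cases h with
  | zero _ hV => exact hV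
  | step _ m q c hne _ =>
    obtain ⟨f, hf⟩ := hne (Classical.arbitrary A)
    split_ifs at hf
    exacts [⟨f, hf.1⟩, ⟨f, hf.1⟩]

theorem GuessForce.lt_ncard [Nonempty A] (hok : ∀ q, Relator.RightTotal (ok q)) (hV : V.Finite)
    (h : GuessForce ok V m) : m < V.ncard := by
  induction h with
  | zero V hne => exact (Set.ncard_pos hV).2 hne
  | step V m q c hne h ih =>
    obtain ⟨f, hf⟩ := (GuessForce.step V m q c hne h).nonempty
    obtain ⟨g, hg⟩ := hok q f
    have forced := ih g
    cases hc : c g with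
    | true =>
      simp only [hc, if_true] at forced
      have fewer : {f ∈ V | ¬ ok q g f}.ncard < V.ncard :=
        Set.ncard_lt_ncard ⟨Set.sep_subset V _, fun hsub => (hsub hf).2 hg⟩ hV
      have := forced (hV.sep _)
      omega
    | false =>
      simp only [hc, Bool.false_eq_true, if_false] at forced
      exact (forced (hV.sep _)).trans_le (Set.ncard_le_ncard (Set.sep_subset V _) hV)

theorem GuessForce.succ_of_forall_not [Nonempty A] (q : Q)
    (h : ∀ g, GuessForce ok {f ∈ V | ¬ ok q g f} m) : GuessForce ok V (m + 1) :=
  .step V m q (fun _ => true) (fun g => (h g).nonempty) h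

theorem GuessForce.of_answers {q : Q} (hq : Relator.LeftUnique (ok q)) {S : Finset A}
    (hS : S.Nonempty) (h : ∀ g ∈ S, GuessForce ok {f ∈ V | ok q g f} m) :
    GuessForce ok {f ∈ V | ∃ g ∈ S, ok q g f} (m + (S.card - 1)) := by
  classical
  induction S using Finset.strongInduction with
  | H S ih =>
    obtain ⟨a, rfl⟩ | hS := hS.exists_eq_singleton_or_nontrivial
    · simpa using h a
    · obtain ⟨a, ha⟩ := hS.nonempty
      have : Nonempty A := ⟨a⟩
      have one_lt_card : 1 < S.card := Finset.one_lt_card_iff_nontrivial.2 hS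
      rw [show m + (S.card - 1) = m + (S.card - 1 - 1) + 1 by omega]
      refine .succ_of_forall_not q fun g => ?_
      obtain ⟨g₀, hg₀, hg⟩ : ∃ g₀ ∈ S, g ∉ S.erase g₀ := by
        by_cases hgS : g ∈ S
        · exact ⟨g, hgS, S.notMem_erase g⟩
        · exact ⟨a, ha, fun hmem => hgS (Finset.mem_of_mem_erase hmem)⟩
      have forced := ih (S.erase g₀) (Finset.erase_ssubset hg₀) hS.erase_nonempty
        fun g' hg' => h g' (Finset.mem_of_mem_erase hg')
      rw [Finset.card_erase_of_mem hg₀] at forced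
      refine forced.mono ?_
      rintro f ⟨hfV, g', hg', hfg'⟩
      exact ⟨⟨hfV, g', Finset.mem_of_mem_erase hg', hfg'⟩,
        fun hfg => hg (hq hfg hfg' ▸ hg')⟩

theorem GuessForce.of_query [Fintype A] [Nonempty A] {q : Q} (hq : Relator.LeftUnique (ok q))
    (h : ∀ g, GuessForce ok {f ∈ V | ok q g f} m) :
    GuessForce ok V (m + (Fintype.card A - 1)) :=
  (GuessForce.of_answers hq Finset.univ_nonempty fun g _ => h g).mono (Set.sep_subset V _)

theorem GuessForce.of_queries [Fintype A] [Nonempty A] (hok : ∀ q, Relator.LeftUnique (ok q))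
    {ι : Type*} (q : ι → Q) (s : Finset ι)
    (h : ∀ a : ι → A, GuessForce ok {f ∈ V | ∀ i ∈ s, ok (q i) (a i) f} m) :
    GuessForce ok V (m + s.card * (Fintype.card A - 1)) := by
  classical
  induction s using Finset.induction_on generalizing V with
  | empty => simpa using h fun _ => Classical.arbitrary A
  | insert i s hi ih =>
    rw [Finset.card_insert_of_notMem hi, add_mul, one_mul, ← add_assoc]
    refine .of_query (hok (q i)) fun g => ih fun a => (h (Function.update a i g)).mono ?_
    rintro f ⟨hfV, hf⟩
    refine ⟨⟨hfV, by simpa using hf i (s.mem_insert_self i)⟩, fun j hj => ?_⟩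
    have hji : j ≠ i := ne_of_mem_of_not_mem hj hi
    simpa [hji] using hf j (Finset.mem_insert_of_mem hj)

end WeakReinforcement

theorem mul_mul_pow_pred {R : Type*} [CommSemiring R] (x : R) (k : ℕ) :
    x * (k * x ^ (k - 1)) = k * x ^ k := by
  cases k with
  | zero => simp
  | succ k => rw [Nat.add_sub_cancel, pow_succ]; ring

section Monovary

theorem lt_iff_lt_of_monovary {ι α β : Type*} [LinearOrder α] [LinearOrder β] {f : ι → α}
    {g : ι → β} (hf : f.Injective) (hg : g.Injective) (h : Monovary f g) (i j : ι) :
    g i < g j ↔ f i < f j :=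
  ⟨fun hij => (h hij).lt_of_ne fun heq => hij.ne (congrArg g (hf heq)),
    fun hij => (h.symm hij).lt_of_ne fun heq => hij.ne (congrArg f (hg heq))⟩

theorem exists_perm_monovary {n : ℕ} {β : Type*} [LinearOrder β] (b : Fin n → β) :
    ∃ f : Equiv.Perm (Fin n), Monovary f b := by
  refine ⟨(Tuple.sort b).symm, Monovary.symm ?_⟩
  simpa [Function.comp_assoc] using
    (monovary_id_iff.2 (Tuple.monotone_sort b)).comp_right (Tuple.sort b).symm

theorem perm_eq_of_lt_imp_lt {r : ℕ} {σ τ : Equiv.Perm (Fin r)}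
    (h : ∀ i j, σ i < σ j → τ i < τ j) : σ = τ := by
  have strictMono : StrictMono (τ ∘ σ.symm) := fun i j hij => h _ _ (by simpa using hij)
  have comp_eq_id : τ ∘ σ.symm = id :=
    (strictMono.range_inj strictMono_id).1
      (by rw [(τ.surjective.comp σ.symm.surjective).range_eq, Set.range_id])
  ext1 i
  simpa using (congrFun comp_eq_id (σ i)).symm

end Monovary

section OrderModel

variable {n r : ℕ}

/-- `σ` is the order pattern of the values of `f` at the points `x`. This is the relation of correct
guesses in `optOrder`. -/
def IsPattern (x : {x : Fin r → Fin n // Function.Injective x}) (σ : Equiv.Perm (Fin r))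
    (f : Equiv.Perm (Fin n)) : Prop :=
  ∀ i j, σ i < σ j ↔ f (x.1 i) < f (x.1 j)

theorem isPattern_of_monovary {x : {x : Fin r → Fin n // Function.Injective x}}
    {σ : Equiv.Perm (Fin r)} {f : Equiv.Perm (Fin n)} (h : Monovary (f ∘ x.1) σ) :
    IsPattern x σ f :=
  lt_iff_lt_of_monovary (f.injective.comp x.2) σ.injective h

theorem leftUnique_isPattern (x : {x : Fin r → Fin n // Function.Injective x}) :
    Relator.LeftUnique (IsPattern x) :=
  fun _ _ _ hσ hτ => perm_eq_of_lt_imp_lt fun i j hij => (hτ i j).2 ((hσ i j).1 hij)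

theorem rightTotal_isPattern (x : {x : Fin r → Fin n // Function.Injective x}) :
    Relator.RightTotal (IsPattern x) := fun f =>
  let ⟨σ, hσ⟩ := exists_perm_monovary (f ∘ x.1)
  ⟨σ, isPattern_of_monovary hσ.symm⟩

theorem le_optOrder {F : Set (Equiv.Perm (Fin n))} {m : ℕ}
    (h : GuessForce (IsPattern (r := r)) F m) : m ≤ optOrder n r F :=
  le_csSup ⟨F.ncard, fun _ hm =>
    (GuessForce.lt_ncard (ok := IsPattern) rightTotal_isPattern F.toFinite hm).le⟩ h

variable {ι κ : Type*}

/-- The splitting of each block `i` into `r` blocks `(i, 0), …, (i, r - 1)`, where `(i, s)` collects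
for every `a` the point of the tuple `(i, ·, a)` to which `σ (i, a)` assigns the rank `s`. -/
def splitBlocks (σ : ι × κ → Equiv.Perm (Fin r)) : ι × Fin r × κ ≃ (ι ×ₗ Fin r) × κ where
  toFun p := (toLex (p.1, σ (p.1, p.2.2) p.2.1), p.2.2)
  invFun p := ((ofLex p.1).1, (σ ((ofLex p.1).1, p.2)).symm (ofLex p.1).2, p.2)
  left_inv p := by simp
  right_inv p := by simp

/-- The permutations that put the blocks `e (i, ·)` one after another, in the order of their indices
`i`, while leaving the order inside each block free. -/
def blockOrdered [Preorder ι] (e : ι × κ → Fin n) : Set (Equiv.Perm (Fin n)) :=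
  {f | Monovary (f ∘ e) Prod.fst}

theorem blockOrdered_nonempty [LinearOrder ι] (e : ι × κ ↪ Fin n) : (blockOrdered e).Nonempty := by
  obtain ⟨f, hf⟩ :=
    exists_perm_monovary (Function.extend e (fun p => (p.1 : WithBot ι)) fun _ => ⊥)
  refine ⟨f, fun p q hpq => hf ?_⟩
  simpa only [e.injective.extend_apply, WithBot.coe_lt_coe] using hpq

theorem monovary_of_mem_blockOrdered_splitBlocks [Preorder ι] {e : ι × Fin r × κ ↪ Fin n}
    {σ : ι × κ → Equiv.Perm (Fin r)} {f : Equiv.Perm (Fin n)}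
    (hf : f ∈ blockOrdered ((splitBlocks σ).symm.toEmbedding.trans e)) :
    Monovary (f ∘ e) fun p => toLex (p.1, σ (p.1, p.2.2) p.2.1) := by
  simpa [Function.comp_def, splitBlocks] using Monovary.comp_right hf (splitBlocks σ)

theorem guessForce_blockOrdered_of_split [Preorder ι] [Fintype ι] [Fintype κ] {m : ℕ}
    (e : ι × Fin r × κ ↪ Fin n)
    (h : ∀ e' : (ι ×ₗ Fin r) × κ ↪ Fin n, GuessForce (IsPattern (r := r)) (blockOrdered e') m) :
    GuessForce (IsPattern (r := r)) (blockOrdered e)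
      (m + Fintype.card ι * Fintype.card κ * (r.factorial - 1)) := by
  let tuple (p : ι × κ) : {x : Fin r → Fin n // Function.Injective x} :=
    ⟨fun s => e (p.1, s, p.2), fun s t hst => by simpa using hst⟩
  have forced := GuessForce.of_queries (V := blockOrdered e) (m := m) leftUnique_isPattern tuple
    Finset.univ fun σ => (h ((splitBlocks σ).symm.toEmbedding.trans e)).mono fun f hf => ?_
  · simpa [Fintype.card_perm] using forced
  · have lex_monovary := monovary_of_mem_blockOrdered_splitBlocks hf
    exact ⟨fun p q hpq => lex_monovary (Prod.Lex.toLex_lt_toLex.2 (.inl hpq)),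
      fun p _ => isPattern_of_monovary fun s t hst =>
        lex_monovary (i := (p.1, s, p.2)) (j := (p.1, t, p.2))
          (Prod.Lex.toLex_lt_toLex.2 (.inr ⟨rfl, hst⟩))⟩

theorem guessForce_blockOrdered [LinearOrder ι] [Fintype ι] (k : ℕ)
    (e : ι × Fin (r ^ k) ↪ Fin n) :
    GuessForce (IsPattern (r := r)) (blockOrdered e)
      (Fintype.card ι * (k * r ^ (k - 1)) * (r.factorial - 1)) := by
  induction k generalizing ι with
  | zero => simpa using .zero _ (blockOrdered_nonempty e)
  | succ k ih =>
    let splitIndex : Fin (r ^ (k + 1)) ≃ Fin r × Fin (r ^ k) :=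
      (finCongr (pow_succ' r k)).trans finProdFinEquiv.symm
    have forced := guessForce_blockOrdered_of_split
      (((Equiv.refl ι).prodCongr splitIndex.symm).toEmbedding.trans e) ih
    have count : Fintype.card (ι ×ₗ Fin r) * (k * r ^ (k - 1)) * (r.factorial - 1) +
          Fintype.card ι * Fintype.card (Fin (r ^ k)) * (r.factorial - 1) =
        Fintype.card ι * ((k + 1) * r ^ k) * (r.factorial - 1) := by
      rw [Fintype.card_lex, Fintype.card_prod, Fintype.card_fin, Fintype.card_fin]
      linear_combination Fintype.card ι * (r.factorial - 1) * mul_mul_pow_pred r k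
    rw [count] at forced
    refine forced.mono fun f hf => ?_
    simpa [blockOrdered, Function.comp_def, Prod.map] using
      Monovary.comp_right hf ((Equiv.refl ι).prodCongr splitIndex)

theorem mul_le_optOrder_univ {q k : ℕ} (h : q * r ^ k ≤ n) :
    q * (k * r ^ (k - 1)) * (r.factorial - 1) ≤ optOrder n r Set.univ := by
  obtain ⟨e⟩ : Nonempty (Fin q × Fin (r ^ k) ↪ Fin n) :=
    Function.Embedding.nonempty_of_card_le (by simpa using h)
  simpa using le_optOrder ((guessForce_blockOrdered k e).mono (Set.subset_univ _))

end OrderModel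

section Asymptotics

theorem one_sub_inv_mul_le_div_mul {n d c : ℕ} (hd : 0 < d) (hc : 0 < c) (h : d * c ≤ n) :
    (1 - (c : ℝ)⁻¹) * n ≤ (n / d : ℕ) * d := by
  have mod_le : ((n % d : ℕ) : ℝ) ≤ (c : ℝ)⁻¹ * n := by
    rw [inv_mul_eq_div, le_div_iff₀ (by exact_mod_cast hc)]
    exact_mod_cast (Nat.mul_le_mul_right c (Nat.mod_lt n hd).le).trans h
  have div_add_mod : (d : ℝ) * (n / d : ℕ) + (n % d : ℕ) = n := by
    exact_mod_cast Nat.div_add_mod n d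
  linarith

theorem one_sub_inv_mul_factorial_le {r : ℕ} (hr : 0 < r) :
    (1 - (r : ℝ)⁻¹) * r.factorial ≤ (r.factorial - 1 : ℕ) := by
  have one_le : 1 ≤ (r : ℝ)⁻¹ * r.factorial := by
    rw [← Nat.mul_factorial_pred hr.ne', Nat.cast_mul, inv_mul_cancel_left₀ (by positivity)]
    exact_mod_cast Nat.factorial_pos _
  rw [Nat.cast_pred r.factorial_pos]
  linarith

theorem factorial_mul_le_optOrder_univ {n r k : ℕ} (hr : 0 < r) (h : r ^ (k + 1) ≤ n) :
    ((r - 1).factorial : ℝ) * n * ((1 - (r : ℝ)⁻¹) ^ 2 * k) ≤ optOrder n r Set.univ := by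
  have ratio_nonneg : 0 ≤ 1 - (r : ℝ)⁻¹ := sub_nonneg.2 (Nat.cast_inv_le_one r)
  refine le_of_mul_le_mul_left ?_ (Nat.cast_pos.2 hr : (0 : ℝ) < r)
  calc (r : ℝ) * ((r - 1).factorial * n * ((1 - (r : ℝ)⁻¹) ^ 2 * k))
      = (1 - (r : ℝ)⁻¹) * n * k * ((1 - (r : ℝ)⁻¹) * r.factorial) := by
        rw [← Nat.mul_factorial_pred hr.ne', Nat.cast_mul]
        ring
    _ ≤ (n / r ^ k : ℕ) * (r ^ k : ℕ) * k * (r.factorial - 1 : ℕ) := by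
        gcongr ?_ * _ * ?_
        · exact one_sub_inv_mul_le_div_mul (by positivity) hr (pow_succ r k ▸ h)
        · exact one_sub_inv_mul_factorial_le hr
    _ = r * (n / r ^ k * (k * r ^ (k - 1)) * (r.factorial - 1) : ℕ) := by
        push_cast
        linear_combination
          -((n / r ^ k : ℕ) : ℝ) * (r.factorial - 1 : ℕ) * mul_mul_pow_pred (r : ℝ) k
    _ ≤ r * optOrder n r Set.univ := by
        gcongr
        exact mul_le_optOrder_univ (Nat.div_mul_le_self n (r ^ k))

theorem eventually_mul_logb_le {b : ℕ} (hb : 1 < b) {a c : ℝ} (hac : a < c) (hc : 0 ≤ c) (d : ℝ) :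
    ∀ᶠ n : ℕ in atTop, a * Real.logb b n ≤ c * (Nat.log b n - d) := by
  have tendsto_logb : Tendsto (fun n : ℕ => (c - a) * Real.logb b n) atTop atTop :=
    ((Real.tendsto_logb_atTop (by exact_mod_cast hb)).comp
      tendsto_natCast_atTop_atTop).const_mul_atTop (sub_pos.2 hac)
  filter_upwards [tendsto_logb.eventually_ge_atTop (c * (d + 1))] with n hn
  have logb_le : Real.logb b n ≤ Nat.log b n + 1 := by
    rw [← Real.natFloor_logb_natCast]
    exact (Nat.lt_floor_add_one _).le
  have := mul_le_mul_of_nonneg_left logb_le hc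
  linarith

theorem eventually_lt_one_sub_inv_sq {a : ℝ} (ha : a < 1) :
    ∀ᶠ r : ℕ in atTop, a < (1 - (r : ℝ)⁻¹) ^ 2 := by
  have tendsto_one : Tendsto (fun r : ℕ => (1 - (r : ℝ)⁻¹) ^ 2) atTop (𝓝 1) := by
    simpa using (tendsto_inv_atTop_nhds_zero_nat (𝕜 := ℝ)).const_sub 1 |>.pow 2
  exact tendsto_one.eventually_const_lt ha

end Asymptotics

/-- For every `ε > 0` there exists `r₀` such that for every integer
`r ≥ r₀` there exists `n₀` such that for all `n ≥ n₀`,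
`opt_weak,<,r(S_n) ≥ (1−ε)·(r−1)!·n·log_r(n)`. -/
theorem stmt14 (ε : ℝ) (hε : 0 < ε) :
    ∃ r₀ : ℕ, ∀ r : ℕ, r₀ ≤ r → ∃ n₀ : ℕ, ∀ n : ℕ, n₀ ≤ n →
      (1 - ε) * ((r - 1).factorial : ℝ) * n * Real.logb r n
        ≤ (optOrder n r (Set.univ : Set (Equiv.Perm (Fin n))) : ℝ) := by
  obtain ⟨r₀, h⟩ := eventually_atTop.1
    ((eventually_lt_one_sub_inv_sq (sub_lt_self 1 hε)).and (eventually_gt_atTop 1))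
  refine ⟨r₀, fun r hr => eventually_atTop.1 ?_⟩
  obtain ⟨ratio_lt, one_lt_r⟩ := h r hr
  filter_upwards [eventually_mul_logb_le one_lt_r ratio_lt (sq_nonneg _) 1, eventually_ge_atTop r]
    with n hlog hrn
  obtain ⟨k, hk⟩ : ∃ k, Nat.log r n = k + 1 :=
    Nat.exists_eq_add_one.2 (Nat.log_pos one_lt_r hrn)
  have pow_le : r ^ (k + 1) ≤ n := hk ▸ Nat.pow_log_le_self r (by omega)
  rw [hk, Nat.cast_succ, add_sub_cancel_right] at hlog
  calc (1 - ε) * ((r - 1).factorial : ℝ) * n * Real.logb r n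
      = (r - 1).factorial * n * ((1 - ε) * Real.logb r n) := by ring
    _ ≤ (r - 1).factorial * n * ((1 - (r : ℝ)⁻¹) ^ 2 * k) := by gcongr
    _ ≤ optOrder n r Set.univ := factorial_mul_le_optOrder_univ (by omega) pow_le
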